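/- Let N ≥ 2, α > 1 and p > 0. Set A = N − 2 + 4/(α+1), c* = [ (2α/(α+1)) · (N − 2 + 2/(α+1)) ]^{−1/(α+1)}, C = p/c*, and g(φ) = (2/(α+1)) · (N − 2 + 2/(α+1)) · ( φ − φ^{−α} ) for φ > 0. Then there exists exactly one positive C² function φ : ℝ → ℝ satisfying φ''(t) − A·φ'(t) + g(φ(t)) + C·e^{−(2α/(α+1))t} = 0 for all t ∈ ℝ together with 0 < liminf_{t→∞} φ(t) ≤ limsup_{t→∞} φ(t) < ∞. -/

import Mathlib

open Set Filter

noncomputable section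

/-!
Put `x s = φ (-s)`. Then `x'' + A x' + g x + f = 0` is an oscillator with damping `A`, whose force
`-g` pulls back to the rest point `1` and has an infinite potential barrier at `0`, and whose
external force `f s = C * exp (l * s)` dies out at `-∞`. Since the damping absorbs
`-A v ^ 2 - v * f ≤ f ^ 2 / (4 * A)`, by time `s` the external force has fed in at most the integral
`Φ s` of `f ^ 2 / (4 * A)` over `(-∞, s]`; call a motion *low-energy* if its energy never exceeds
`Φ`.

Low-energy motions stay in a box away from the barrier and are close to rest in the remote past.
Near rest the linearized equation enlarges distances by at most a constant factor, so low-energy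
motions on `[a, T]` become uniformly close as `a → -∞`. Hence the motions starting at rest at
time `-n` converge to a low-energy motion on the whole line, and there is only one.

Conversely, a motion trapped in a compact subinterval of `(0, ∞)` near `-∞` has bounded velocity
there, so a strict Lyapunov function forces it to rest at `-∞`; its energy minus `Φ` is then
nonincreasing with limit `0` at `-∞`, that is, the motion is low-energy.
-/

open Function
open scoped Topology NNReal

lemma exists_forall_tendstoUniformlyOn_Icc {E : Type*} [UniformSpace E] [CompleteSpace E]
    {γ : ℕ → ℝ → E}
    (hγ : ∀ T, UniformCauchySeqOn γ atTop (Icc (-T) T)) :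
    ∃ γ', ∀ T, TendstoUniformlyOn γ γ' atTop (Icc (-T) T) := by
  have hpointwise : ∀ t, ∃ x, Tendsto (γ · t) atTop (𝓝 x) := fun t =>
    cauchySeq_tendsto_of_complete ((hγ |t|).cauchySeq ⟨neg_abs_le t, le_abs_self t⟩)
  choose γ' hγ' using hpointwise
  exact ⟨γ', fun T => (hγ T).tendstoUniformlyOn_of_tendsto fun t _ => hγ' t⟩

lemma exists_lipschitzWith_retraction_Icc_prod_Icc {a b c d : ℝ} (hab : a ≤ b) (hcd : c ≤ d) :
    ∃ P : ℝ × ℝ → ℝ × ℝ, LipschitzWith 1 P ∧ (∀ z, P z ∈ Icc a b ×ˢ Icc c d) ∧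
      ∀ z ∈ Icc a b ×ˢ Icc c d, P z = z := by
  refine ⟨fun z => (projIcc a b hab z.1, projIcc c d hcd z.2), ?_,
    fun z => ⟨Subtype.coe_prop _, Subtype.coe_prop _⟩, fun z hz => ?_⟩
  · have hfst := (LipschitzWith.projIcc hab).comp (LipschitzWith.prod_fst (β := ℝ))
    have hsnd := (LipschitzWith.projIcc hcd).comp (LipschitzWith.prod_snd (α := ℝ))
    simpa using ((LipschitzWith.subtype_val _).comp hfst).prodMk
      ((LipschitzWith.subtype_val _).comp hsnd)
  · simp only [projIcc_of_mem hab hz.1, projIcc_of_mem hcd hz.2]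

section IntegralCurves

variable {E : Type*} [NormedAddCommGroup E] [NormedSpace ℝ E] {F : ℝ → E → E} {a b : ℝ}

lemma exists_isIntegralCurveOn_Icc_of_lipschitzWith [CompleteSpace E] (hab : a ≤ b) {K L : ℝ≥0}
    (hlip : ∀ t ∈ Icc a b, LipschitzWith K (F t)) (hcont : ∀ x, ContinuousOn (F · x) (Icc a b))
    (hbound : ∀ t ∈ Icc a b, ∀ x, ‖F t x‖ ≤ L) (x₀ : E) :
    ∃ γ, γ a = x₀ ∧ IsIntegralCurveOn γ F (Icc a b) := by
  have hPL : IsPicardLindelof F (⟨a, left_mem_Icc.2 hab⟩ : Icc a b) x₀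
      (L * (b - a).toNNReal) 0 L K :=
    { lipschitzOnWith t ht := (hlip t ht).lipschitzOnWith
      continuousOn x _ := hcont x
      norm_le t ht x _ := hbound t ht x
      mul_max_le := by simp [hab] }
  exact hPL.exists_eq_forall_mem_Icc_hasDerivWithinAt₀

lemma mapsTo_Icc_of_mapsTo_closure {X : Type*} [TopologicalSpace X] {γ : ℝ → X} {U : Set X}
    (hU : IsOpen U) (hγ : ContinuousOn γ (Icc a b)) (ha : γ a ∈ U)
    (h : ∀ c ∈ Icc a b, MapsTo γ (Icc a c) (closure U) → γ c ∈ U) : MapsTo γ (Icc a b) U := by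
  by_contra hexit
  obtain ⟨t, ht, htU⟩ : ∃ t ∈ Icc a b, γ t ∉ U := by
    simpa only [MapsTo, not_forall, exists_prop] using hexit
  obtain ⟨c, ⟨hc, hcU⟩, hleast⟩ : ∃ c, IsLeast (Icc a b ∩ γ ⁻¹' Uᶜ) c :=
    (isCompact_Icc.of_isClosed_subset
      (hγ.preimage_isClosed_of_isClosed isClosed_Icc hU.isClosed_compl)
      inter_subset_left).exists_isLeast ⟨t, ht, htU⟩
  have hac : a ≠ c := fun hac => hcU (hac ▸ ha)
  have hinside : MapsTo γ (Ico a c) U := fun s hs => by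
    by_contra hsU
    exact hs.2.not_ge (hleast ⟨⟨hs.1, hs.2.le.trans hc.2⟩, hsU⟩)
  refine hcU (h c hc ?_)
  rw [← closure_Ico hac]
  refine hinside.closure_of_continuousOn (hγ.mono ?_)
  rw [closure_Ico hac]
  exact Icc_subset_Icc_right hc.2

/- Composing `F` with the retraction makes it globally Lipschitz; the a priori estimate keeps the
resulting curve in the region where this changes nothing. -/
lemma exists_isIntegralCurveOn_Icc_of_retraction [CompleteSpace E] (hab : a ≤ b) {S : Set E}
    (hS : IsClosed S) {P : E → E} {K K' L : ℝ≥0} (hP : LipschitzWith K' P) (hPS : ∀ x, P x ∈ S)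
    (hPid : ∀ x ∈ S, P x = x) (hlip : ∀ t ∈ Icc a b, LipschitzOnWith K (F t) S)
    (hcont : ∀ x ∈ S, ContinuousOn (F · x) (Icc a b))
    (hbound : ∀ t ∈ Icc a b, ∀ x ∈ S, ‖F t x‖ ≤ L) {x₀ : E} (hx₀ : x₀ ∈ interior S)
    (hstay : ∀ γ : ℝ → E, γ a = x₀ → ∀ c ∈ Icc a b, IsIntegralCurveOn γ F (Icc a c) →
      MapsTo γ (Icc a c) S → γ c ∈ interior S) :
    ∃ γ, γ a = x₀ ∧ IsIntegralCurveOn γ F (Icc a b) ∧ MapsTo γ (Icc a b) S := by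
  obtain ⟨γ, hγa, hγ⟩ : ∃ γ, γ a = x₀ ∧ IsIntegralCurveOn γ (fun t x => F t (P x)) (Icc a b) :=
    exists_isIntegralCurveOn_Icc_of_lipschitzWith hab
      (fun t ht => lipschitzOnWith_univ.1 <|
        (hlip t ht).comp hP.lipschitzOnWith fun x _ => hPS x)
      (fun x => hcont _ (hPS x)) (fun t ht x => hbound t ht _ (hPS x)) x₀
  have hcurve : ∀ c ∈ Icc a b, MapsTo γ (Icc a c) S → IsIntegralCurveOn γ F (Icc a c) := by
    intro c hc hmaps t ht
    have hsub : Icc a c ⊆ Icc a b := Icc_subset_Icc_right hc.2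
    simpa only [hPid _ (hmaps ht)] using (hγ t (hsub ht)).mono hsub
  have hmaps : MapsTo γ (Icc a b) (interior S) := by
    refine mapsTo_Icc_of_mapsTo_closure isOpen_interior hγ.continuousOn (hγa ▸ hx₀) ?_
    intro c hc hclosure
    have hcS : MapsTo γ (Icc a c) S := hclosure.mono_right hS.closure_interior_subset
    exact hstay γ hγa c hc (hcurve c hc hcS) hcS
  have hmapsS : MapsTo γ (Icc a b) S := hmaps.mono_right interior_subset
  exact ⟨γ, hγa, hcurve b (right_mem_Icc.2 hab) hmapsS, hmapsS⟩

lemma dist_le_of_isIntegralCurveOn_Icc {S : Set E} {K : ℝ≥0} {γ₁ γ₂ : ℝ → E}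
    (hlip : ∀ t ∈ Icc a b, LipschitzOnWith K (F t) S)
    (hγ₁ : IsIntegralCurveOn γ₁ F (Icc a b)) (hγ₂ : IsIntegralCurveOn γ₂ F (Icc a b))
    (h₁ : MapsTo γ₁ (Icc a b) S) (h₂ : MapsTo γ₂ (Icc a b) S) {t : ℝ} (ht : t ∈ Icc a b) :
    dist (γ₁ t) (γ₂ t) ≤ dist (γ₁ a) (γ₂ a) * Real.exp (K * (t - a)) := by
  have hsub : Ico a b ⊆ Icc a b := Ico_subset_Icc_self
  exact dist_le_of_trajectories_ODE_of_mem (fun t ht => hlip t (hsub ht)) hγ₁.continuousOn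
    (fun t ht => (hγ₁ t (hsub ht)).mono_of_mem_nhdsWithin (Icc_mem_nhdsGE_of_mem ht))
    (fun t ht => h₁ (hsub ht)) hγ₂.continuousOn
    (fun t ht => (hγ₂ t (hsub ht)).mono_of_mem_nhdsWithin (Icc_mem_nhdsGE_of_mem ht))
    (fun t ht => h₂ (hsub ht)) le_rfl t ht

lemma hasDerivAt_of_tendstoUniformlyOn_integralCurveOn {ι : Type*} {l : Filter ι} [l.NeBot]
    {γ : ι → ℝ → E} {γ' : ℝ → E} {s : Set ℝ} {t : ℝ} (hs : s ∈ 𝓝 t)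
    (hγ : TendstoUniformlyOn γ γ' l s) (hcurve : ∀ᶠ n in l, IsIntegralCurveOn (γ n) F s)
    (hF : ContinuousAt (uncurry F) (t, γ' t)) : HasDerivAt γ' (F t (γ' t)) t := by
  have hγ' : ContinuousAt γ' t :=
    (hγ.continuousOn (hcurve.mono fun _ h => h.continuousOn).frequently).continuousAt hs
  have hfilter : TendstoUniformlyOnFilter γ γ' l (𝓝 t) :=
    hγ.tendstoUniformlyOnFilter.mono_right (le_principal_iff.2 hs)
  have htime : Tendsto (fun q : ι × ℝ => q.2) (l ×ˢ 𝓝 t) (𝓝 t) := tendsto_snd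
  have hlimit : Tendsto (fun q : ι × ℝ => γ' q.2) (l ×ˢ 𝓝 t) (𝓝 (γ' t)) := hγ'.tendsto.comp htime
  have hcurves : Tendsto (fun q : ι × ℝ => γ q.1 q.2) (l ×ˢ 𝓝 t) (𝓝 (γ' t)) :=
    hlimit.congr_uniformity (tendstoUniformlyOnFilter_iff_tendsto.1 hfilter)
  have hderiv : TendstoUniformlyOnFilter (fun n u => F u (γ n u)) (fun u => F u (γ' u)) l (𝓝 t) :=
    tendstoUniformlyOnFilter_iff_tendsto.2 <|
      ((hF.tendsto.comp (htime.prodMk_nhds hlimit)).prodMk_nhds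
        (hF.tendsto.comp (htime.prodMk_nhds hcurves))).mono_right (nhds_le_uniformity _)
  refine hasDerivAt_of_tendstoUniformlyOnFilter hderiv ?_
    (eventually_of_mem hs fun u hu => hγ.tendsto_at hu)
  filter_upwards [hcurve.prod_mk (eventually_mem_nhds_iff.2 hs)] with q hq
  exact (hq.1 q.2 (mem_of_mem_nhds hq.2)).hasDerivAt hq.2

end IntegralCurves

section DifferentialInequalities

lemma antitoneOn_of_forall_hasDerivWithinAt_nonpos {s : Set ℝ} (hs : Convex ℝ s) {V V' : ℝ → ℝ}
    (hV : ∀ t ∈ s, HasDerivWithinAt V (V' t) s t) (hV' : ∀ t ∈ s, V' t ≤ 0) : AntitoneOn V s :=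
  antitoneOn_of_hasDerivWithinAt_nonpos hs (fun t ht => (hV t ht).continuousWithinAt)
    (fun t ht => (hV t (interior_subset ht)).mono interior_subset)
    fun t ht => hV' t (interior_subset ht)

lemma nonpos_of_hasDerivAt_le_neg_mul {V V' : ℝ → ℝ} {c M T : ℝ} (hc : 0 < c)
    (hV : ∀ t ≤ T, HasDerivAt V (V' t) t) (hV' : ∀ t ≤ T, V' t ≤ -c * V t)
    (hM : ∀ t ≤ T, V t ≤ M) : V T ≤ 0 := by
  have hanti : AntitoneOn (fun t => V t * Real.exp (c * t)) (Iic T) := by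
    refine antitoneOn_of_forall_hasDerivWithinAt_nonpos (convex_Iic T) (fun t ht =>
      ((hV t ht).mul ((hasDerivAt_id t).const_mul c).exp).hasDerivWithinAt) fun t ht => ?_
    have hexp := Real.exp_pos (c * t)
    simp only [id]
    nlinarith [hV' t ht]
  have hbound : ∀ᶠ a in atBot, V T * Real.exp (c * T) ≤ M * Real.exp (c * a) := by
    filter_upwards [eventually_le_atBot T] with a ha
    exact (hanti ha self_mem_Iic ha).trans
      (mul_le_mul_of_nonneg_right (hM a ha) (Real.exp_pos _).le)
  have hzero : Tendsto (fun a => M * Real.exp (c * a)) atBot (𝓝 0) := by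
    simpa using (Real.tendsto_exp_atBot.comp (tendsto_id.const_mul_atBot hc)).const_mul M
  exact nonpos_of_mul_nonpos_left (ge_of_tendsto hzero hbound) (Real.exp_pos _)

lemma abs_sub_le_sub_of_abs_hasDerivWithinAt_le {s : Set ℝ} (hs : Convex ℝ s) {q q' β β' : ℝ → ℝ}
    (hq : ∀ t ∈ s, HasDerivWithinAt q (q' t) s t) (hβ : ∀ t ∈ s, HasDerivWithinAt β (β' t) s t)
    (hle : ∀ t ∈ s, |q' t| ≤ β' t) {x y : ℝ} (hx : x ∈ s) (hy : y ∈ s) (hxy : x ≤ y) :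
    |q y - q x| ≤ β y - β x := by
  have hupper : AntitoneOn (fun t => q t - β t) s :=
    antitoneOn_of_forall_hasDerivWithinAt_nonpos hs (fun t ht => (hq t ht).sub (hβ t ht))
      fun t ht => sub_nonpos.2 ((le_abs_self _).trans (hle t ht))
  have hlower : AntitoneOn (fun t => -q t - β t) s :=
    antitoneOn_of_forall_hasDerivWithinAt_nonpos hs (fun t ht => (hq t ht).neg.sub (hβ t ht))
      fun t ht => sub_nonpos.2 ((neg_le_abs _).trans (hle t ht))
  rw [abs_le]
  constructor <;> linarith [hupper hx hy hxy, hlower hx hy hxy]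

/- The mean value theorem controls `v` somewhere in the interval, and the bound on `w + A v`
controls the variation of `v + A u`. -/
lemma abs_le_of_abs_hasDerivAt_add_le {u v w β β' : ℝ → ℝ} {A M a : ℝ}
    (hu : ∀ t ∈ Icc a (a + 1), HasDerivAt u (v t) t)
    (hv : ∀ t ∈ Icc a (a + 1), HasDerivAt v (w t) t)
    (hβ : ∀ t ∈ Icc a (a + 1), HasDerivAt β (β' t) t)
    (hw : ∀ t ∈ Icc a (a + 1), |w t + A * v t| ≤ β' t)
    (hM : ∀ t ∈ Icc a (a + 1), |u t| ≤ M) :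
    |v (a + 1)| ≤ 2 * M + 2 * |A| * M + (β (a + 1) - β a) := by
  have hleft : a ∈ Icc a (a + 1) := left_mem_Icc.2 (by simp)
  have hright : a + 1 ∈ Icc a (a + 1) := right_mem_Icc.2 (by simp)
  obtain ⟨c, hc, hslope⟩ : ∃ c ∈ Ioo a (a + 1), v c = (u (a + 1) - u a) / (a + 1 - a) :=
    exists_hasDerivAt_eq_slope u v (by simp) (fun t ht => (hu t ht).continuousAt.continuousWithinAt)
      fun t ht => hu t (Ioo_subset_Icc_self ht)
  have hcI : c ∈ Icc a (a + 1) := Ioo_subset_Icc_self hc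
  have hvc : |v c| ≤ 2 * M := by
    rw [hslope, add_sub_cancel_left, div_one]
    exact (abs_sub _ _).trans (by linarith [hM _ hright, hM _ hleft])
  have hvar : ∀ x ∈ Icc a (a + 1), ∀ y ∈ Icc a (a + 1), x ≤ y →
      |v y + A * u y - (v x + A * u x)| ≤ β y - β x := fun x hx y hy =>
    abs_sub_le_sub_of_abs_hasDerivWithinAt_le (q := fun t => v t + A * u t) (convex_Icc _ _)
      (fun t ht => ((hv t ht).add ((hu t ht).const_mul A)).hasDerivWithinAt)
      (fun t ht => (hβ t ht).hasDerivWithinAt) hw hx hy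
  have hβac : β a ≤ β c := sub_nonneg.1 ((abs_nonneg _).trans (hvar a hleft c hcI hc.1.le))
  have hAu : |A * (u c - u (a + 1))| ≤ 2 * |A| * M := by
    rw [abs_mul, mul_comm 2, mul_assoc]
    exact mul_le_mul_of_nonneg_left
      ((abs_sub _ _).trans (by linarith [hM _ hright, hM _ hcI])) (abs_nonneg A)
  calc |v (a + 1)|
      = |v c + A * (u c - u (a + 1)) + (v (a + 1) + A * u (a + 1) - (v c + A * u c))| := by
        congr 1; ring
    _ ≤ |v c| + |A * (u c - u (a + 1))| + |v (a + 1) + A * u (a + 1) - (v c + A * u c)| :=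
        abs_add_three _ _ _
    _ ≤ 2 * M + 2 * |A| * M + (β (a + 1) - β a) := by
        linarith [hvar c hcI (a + 1) hright hc.2.le]

end DifferentialInequalities

section RestoringForce

/-- The potential energy of the force `-g`, normalized to vanish at the rest point `1`. -/
def potential (g : ℝ → ℝ) (x : ℝ) : ℝ := ∫ s in (1 : ℝ)..x, g s

lemma hasDerivAt_potential_of_continuousOn {g : ℝ → ℝ} (hg : ContinuousOn g (Ioi 0)) {x : ℝ}
    (hx : 0 < x) : HasDerivAt (potential g) (g x) x := by
  refine intervalIntegral.integral_hasDerivAt_right ?_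
    (hg.stronglyMeasurableAtFilter isOpen_Ioi x hx) (hg.continuousAt (Ioi_mem_nhds hx))
  exact (hg.mono fun z hz => (lt_min one_pos hx).trans_le hz.1).intervalIntegrable

/-- `-g` pulls back to the rest point `1` with stiffness at least `K`, and its potential is an
infinite barrier at `0`. -/
structure IsRestoringForce (K : ℝ) (g : ℝ → ℝ) : Prop where
  pos : 0 < K
  contDiffOn : ContDiffOn ℝ 1 g (Ioi 0)
  map_one : g 1 = 0
  le_deriv : ∀ x, 0 < x → K ≤ deriv g x
  tendsto_potential : Tendsto (potential g) (𝓝[>] 0) atTop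

namespace IsRestoringForce

variable {K : ℝ} {g : ℝ → ℝ} {x y : ℝ}

lemma differentiableAt (hg : IsRestoringForce K g) (hx : 0 < x) : DifferentiableAt ℝ g x :=
  (hg.contDiffOn.differentiableOn one_ne_zero).differentiableAt (Ioi_mem_nhds hx)

lemma hasDerivAt_potential (hg : IsRestoringForce K g) (hx : 0 < x) :
    HasDerivAt (potential g) (g x) x :=
  hasDerivAt_potential_of_continuousOn hg.contDiffOn.continuousOn hx

lemma mul_sub_le_sub (hg : IsRestoringForce K g) (hx : 0 < x) (hxy : x ≤ y) :
    K * (y - x) ≤ g y - g x :=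
  (convex_Ioi 0).mul_sub_le_image_sub_of_le_deriv hg.contDiffOn.continuousOn
    ((hg.contDiffOn.differentiableOn one_ne_zero).mono interior_subset)
    (fun z hz => hg.le_deriv z (interior_subset hz)) x hx y (hx.trans_le hxy) hxy

lemma mul_sq_le (hg : IsRestoringForce K g) (hx : 0 < x) :
    K * (x - 1) ^ 2 ≤ g x * (x - 1) := by
  rcases le_total x 1 with h | h
  · nlinarith [hg.mul_sub_le_sub hx h, hg.map_one]
  · nlinarith [hg.mul_sub_le_sub one_pos h, hg.map_one]

/- Subtracting the tangent parabola leaves a convex function that is stationary at `x`. -/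
lemma potential_add_le (hg : IsRestoringForce K g) (hx : 0 < x) (hy : 0 < y) :
    potential g x + g x * (y - x) + K / 2 * (y - x) ^ 2 ≤ potential g y := by
  let D : ℝ → ℝ := fun z => potential g z - g x * (z - x) - K / 2 * (z - x) ^ 2
  have hD : ∀ z, 0 < z → HasDerivAt D (g z - g x - K * (z - x)) z := fun z hz => by
    refine (((hg.hasDerivAt_potential hz).sub (((hasDerivAt_id z).sub_const x).const_mul (g x))).sub
      ((((hasDerivAt_id z).sub_const x).pow 2).const_mul (K / 2))).congr_deriv ?_
    simp only [id]
    ring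
  have hmono : MonotoneOn (deriv D) (interior (Ioi 0)) := by
    rw [interior_Ioi]
    intro z hz w hw hzw
    rw [(hD z hz).deriv, (hD w hw).deriv]
    linarith [hg.mul_sub_le_sub hz hzw]
  have hconvex : ConvexOn ℝ (Ioi 0) D :=
    hmono.convexOn_of_deriv (convex_Ioi 0)
      (fun z hz => (hD z hz).continuousAt.continuousWithinAt)
      fun z hz => (hD z (interior_subset hz)).differentiableAt.differentiableWithinAt
  have hmin : IsMinOn D (Ioi 0) x := by
    refine hconvex.isMinOn_of_leftDeriv_eq_zero (by simpa using hx) ?_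
    rw [(hD x hx).hasDerivWithinAt.derivWithin (uniqueDiffWithinAt_Iio x)]
    ring
  have hDxy : D x ≤ D y := hmin hy
  simp only [D, sub_self] at hDxy
  linarith

lemma mul_sq_le_potential (hg : IsRestoringForce K g) (hx : 0 < x) :
    K / 2 * (x - 1) ^ 2 ≤ potential g x := by
  simpa [hg.map_one, potential] using hg.potential_add_le one_pos hx

lemma potential_le_mul (hg : IsRestoringForce K g) (hx : 0 < x) :
    potential g x ≤ g x * (x - 1) := by
  have htangent := hg.potential_add_le hx one_pos
  have hone : potential g 1 = 0 := intervalIntegral.integral_same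
  nlinarith [mul_nonneg hg.pos.le (sq_nonneg (1 - x))]

end IsRestoringForce

/-- The mechanical energy of the phase-space point `z = (position, velocity)`. -/
def energy (g : ℝ → ℝ) (z : ℝ × ℝ) : ℝ := z.2 ^ 2 / 2 + potential g z.1

namespace IsRestoringForce

variable {K : ℝ} {g : ℝ → ℝ} {z : ℝ × ℝ}

lemma mul_sq_add_sq_le_energy (hg : IsRestoringForce K g) (hz : 0 < z.1) :
    K / 2 * (z.1 - 1) ^ 2 + z.2 ^ 2 / 2 ≤ energy g z := by
  rw [energy, add_comm]
  gcongr
  exact hg.mul_sq_le_potential hz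

lemma exists_box_of_energy_le (hg : IsRestoringForce K g) (e : ℝ) :
    ∃ m M : ℝ, 0 < m ∧ ∀ z : ℝ × ℝ, 0 < z.1 → energy g z ≤ e →
      z ∈ Ioo m M ×ˢ Ioo (-M) M := by
  obtain ⟨m, hm, hbarrier⟩ : ∃ m > 0, ∀ x ∈ Ioo 0 m, e < potential g x :=
    (nhdsGT_basis 0).eventually_iff.1 (hg.tendsto_potential.eventually_gt_atTop e)
  refine ⟨m / 2, 2 + 2 / K * e + 2 * e, half_pos hm, fun z hz he => ?_⟩
  have hle := (hg.mul_sq_add_sq_le_energy hz).trans he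
  have hK := hg.pos
  have hx : (z.1 - 1) ^ 2 ≤ 2 / K * e := by
    rw [div_mul_eq_mul_div, le_div_iff₀ hK]
    nlinarith [sq_nonneg z.2]
  have hv : z.2 ^ 2 ≤ 2 * e := by nlinarith [mul_nonneg hK.le (sq_nonneg (z.1 - 1))]
  have hmz : m ≤ z.1 := by
    by_contra! hlt
    have hpot : potential g z.1 ≤ energy g z := le_add_of_nonneg_left (by positivity)
    exact (hbarrier z.1 ⟨hz, hlt⟩).not_ge (hpot.trans he)
  refine ⟨⟨by linarith, ?_⟩, ?_, ?_⟩
  · nlinarith [sq_nonneg (z.1 - 1 - 1), sq_nonneg z.2]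
  · nlinarith [sq_nonneg (z.2 + 1), sq_nonneg (z.1 - 1)]
  · nlinarith [sq_nonneg (z.2 - 1), sq_nonneg (z.1 - 1)]

end IsRestoringForce

end RestoringForce

section Lyapunov

/- In this section `q` and `v` are the displacement and the velocity of an oscillator with damping
`A`, `g` is the restoring force, `G` its potential and `X` the external force. -/

lemma lyapunov_coercive {K ε q v G : ℝ} (hε : 0 ≤ ε) (hε_half : ε ≤ 1 / 2) (hεK : ε ≤ K / 2)
    (hG : K / 2 * q ^ 2 ≤ G) : ε / 2 * (q ^ 2 + v ^ 2) ≤ v ^ 2 / 2 + G + ε * (q * v) := by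
  nlinarith [mul_nonneg hε (sq_nonneg (q + v)), mul_le_mul_of_nonneg_right hε_half (sq_nonneg v),
    mul_le_mul_of_nonneg_right hεK (sq_nonneg q)]

/- Young's inequality absorbs each cross term into the damping `A v ^ 2` and into the restoring
term `ε g q`, half of which is kept to dominate `G`. -/
lemma lyapunov_dissipation {A K ε v q g G X : ℝ} (hA : 0 < A) (hK : 0 < K) (hε : 0 < ε)
    (hεA : ε ≤ A / 4) (hεAK : ε * A ≤ K / 8) (hε_half : ε ≤ 1 / 2) (hεK : ε ≤ K / 4)
    (hg : K * q ^ 2 ≤ g * q) (hGg : G ≤ g * q) :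
    -A * v ^ 2 - v * X + ε * (v ^ 2 + q * (-A * v - g - X))
      ≤ -(ε / 2) * (v ^ 2 / 2 + G + ε * (q * v)) + (1 / A + 2 * ε / K) * X ^ 2 := by
  have young_vX : -(v * X) ≤ A / 4 * v ^ 2 + 1 / A * X ^ 2 := by
    have hsq : A / 4 * v ^ 2 + 1 / A * X ^ 2 + v * X = A * (v / 2 + X / A) ^ 2 := by
      field_simp
      ring
    linarith [mul_nonneg hA.le (sq_nonneg (v / 2 + X / A))]
  have young_qX : -(ε * (q * X)) ≤ ε * (K / 8) * q ^ 2 + 2 * ε / K * X ^ 2 := by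
    have hsq : ε * (K / 8) * q ^ 2 + 2 * ε / K * X ^ 2 + ε * (q * X)
        = ε * (K / 8) * (q + 4 * X / K) ^ 2 := by
      field_simp
      ring
    linarith [mul_nonneg (by positivity : 0 ≤ ε * (K / 8)) (sq_nonneg (q + 4 * X / K))]
  have young_qv : -(ε * A * (q * v)) ≤ A / 4 * v ^ 2 + ε * (K / 8) * q ^ 2 := by
    have hle : ε * (ε * A) * q ^ 2 ≤ ε * (K / 8) * q ^ 2 := by gcongr
    linarith [mul_nonneg hA.le (sq_nonneg (v / 2 + ε * q))]
  have cross : ε / 2 * (ε * (q * v)) ≤ ε * (K / 16) * q ^ 2 + A / 32 * v ^ 2 := by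
    have hq : ε * (ε * q ^ 2) ≤ ε * (K / 4 * q ^ 2) := by gcongr
    have hv : ε * (ε * v ^ 2) ≤ 1 / 2 * (A / 4 * v ^ 2) := by gcongr
    linarith [mul_nonneg (mul_nonneg hε.le hε.le) (sq_nonneg (q - v))]
  have damping : ε * v ^ 2 ≤ A / 4 * v ^ 2 := by gcongr
  have restoring : ε / 2 * G + ε / 2 * (K * q ^ 2) ≤ ε * (g * q) := by
    linarith [mul_le_mul_of_nonneg_left hg (half_pos hε).le,
      mul_le_mul_of_nonneg_left hGg (half_pos hε).le]
  linarith [mul_nonneg hA.le (sq_nonneg v), mul_nonneg (mul_pos hε hK).le (sq_nonneg q)]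

lemma exists_lyapunov_coefficients {A K : ℝ} (hA : 0 < A) (hK : 0 < K) :
    ∃ ε R : ℝ, 0 < ε ∧ 1 ≤ R ∧ ∀ v q g G X : ℝ,
      K * q ^ 2 ≤ g * q → G ≤ g * q → K / 2 * q ^ 2 ≤ G →
      ε / 2 * (q ^ 2 + v ^ 2) ≤ v ^ 2 / 2 + G + ε * (q * v) ∧
      -A * v ^ 2 - v * X + ε * (v ^ 2 + q * (-A * v - g - X))
        ≤ -(ε / 2) * (v ^ 2 / 2 + G + ε * (q * v)) + R * X ^ 2 := by
  obtain ⟨ε, hε, hle⟩ : ∃ ε > 0, ε ≤ min (min (A / 4) (K / (8 * A))) (min (1 / 2) (K / 4)) :=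
    ⟨_, by positivity, le_rfl⟩
  simp only [le_min_iff] at hle
  obtain ⟨⟨hεA, hεAK⟩, hε_half, hεK⟩ := hle
  have hεAK' : ε * A ≤ K / 8 := by
    rw [le_div_iff₀ (by positivity)] at hεAK
    linarith
  refine ⟨ε, 1 + (1 / A + 2 * ε / K), hε, le_add_of_nonneg_right (by positivity),
    fun v q g G X hg hGg hG => ⟨lyapunov_coercive hε.le hε_half (by linarith) hG, ?_⟩⟩
  linarith [lyapunov_dissipation (v := v) (X := X) hA hK hε hεA hεAK' hε_half hεK hg hGg,
    sq_nonneg X]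

end Lyapunov

section Oscillator

/-- The time-dependent vector field on phase space of the forced, damped oscillator
`x'' + A x' + g x + f = 0`. -/
def oscillatorField (A : ℝ) (g f : ℝ → ℝ) (t : ℝ) (z : ℝ × ℝ) : ℝ × ℝ :=
  (z.2, -A * z.2 - g z.1 - f t)

variable {A K : ℝ} {g f : ℝ → ℝ} {γ : ℝ → ℝ × ℝ} {s : Set ℝ} {t : ℝ}

lemma isIntegralCurveOn_oscillatorField_iff :
    IsIntegralCurveOn γ (oscillatorField A g f) s ↔ ∀ t ∈ s,
      HasDerivWithinAt (fun t => (γ t).1) (γ t).2 s t ∧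
      HasDerivWithinAt (fun t => (γ t).2) (-A * (γ t).2 - g (γ t).1 - f t) s t := by
  refine forall₂_congr fun t _ => ⟨fun h => ⟨?_, ?_⟩, fun h => h.1.prodMk h.2⟩
  · exact hasFDerivAt_fst.comp_hasDerivWithinAt t h
  · exact hasFDerivAt_snd.comp_hasDerivWithinAt t h

lemma hasDerivWithinAt_energy (hg : IsRestoringForce K g)
    (hγ : IsIntegralCurveOn γ (oscillatorField A g f) s) (ht : t ∈ s) (hpos : 0 < (γ t).1) :
    HasDerivWithinAt (fun t => energy g (γ t)) (-A * (γ t).2 ^ 2 - (γ t).2 * f t) s t := by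
  obtain ⟨hx, hv⟩ := isIntegralCurveOn_oscillatorField_iff.1 hγ t ht
  refine (((hv.pow 2).div_const 2).add
    ((hg.hasDerivAt_potential hpos).comp_hasDerivWithinAt t hx)).congr_deriv ?_
  ring

lemma exists_abs_sub_linear_le (hg : IsRestoringForce K g) {η : ℝ} (hη : 0 < η) :
    ∃ δ > 0, ∀ x y, |x - 1| ≤ δ → |y - 1| ≤ δ →
      |g x - g y - deriv g 1 * (x - y)| ≤ η * |x - y| := by
  have hstrict : HasStrictDerivAt g (deriv g 1) 1 :=
    (hg.contDiffOn.contDiffAt (Ioi_mem_nhds one_pos)).hasStrictDerivAt one_ne_zero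
  obtain ⟨δ, hδ, hball⟩ := Metric.nhds_basis_closedBall.eventually_iff.1
    (hstrict.hasStrictFDerivAt.isLittleO.def hη)
  refine ⟨δ, hδ, fun x y hx hy => ?_⟩
  have hxy : (x, y) ∈ Metric.closedBall ((1 : ℝ), (1 : ℝ)) δ := by
    simp [Prod.dist_eq, Real.dist_eq, hx, hy]
  simpa [mul_comm] using hball hxy

lemma norm_sq_le_sq_add_sq (z : ℝ × ℝ) : ‖z‖ ^ 2 ≤ z.1 ^ 2 + z.2 ^ 2 := by
  rcases max_choice ‖z.1‖ ‖z.2‖ with h | h <;>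
    rw [Prod.norm_def, h, Real.norm_eq_abs, sq_abs] <;> simp [sq_nonneg]

lemma sq_add_sq_le_two_mul_norm_sq (z : ℝ × ℝ) : z.1 ^ 2 + z.2 ^ 2 ≤ 2 * ‖z‖ ^ 2 := by
  have hx : z.1 ^ 2 ≤ ‖z‖ ^ 2 := sq_le_sq.2 ((norm_fst_le z).trans (le_abs_self _))
  have hv : z.2 ^ 2 ≤ ‖z‖ ^ 2 := sq_le_sq.2 ((norm_snd_le z).trans (le_abs_self _))
  linarith

/-- The Lyapunov function of the unforced linear oscillator `x'' + A x' + k x = 0`: its energy,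
corrected by a small multiple `ε` of the product of position and velocity. -/
def linearLyapunov (k ε : ℝ) (z : ℝ × ℝ) : ℝ := z.2 ^ 2 / 2 + k / 2 * z.1 ^ 2 + ε * (z.1 * z.2)

lemma linearLyapunov_le {k ε : ℝ} (hk : 0 ≤ k) (hε : 0 ≤ ε) (z : ℝ × ℝ) :
    linearLyapunov k ε z ≤ (1 + k + ε) * ‖z‖ ^ 2 := by
  have hle : linearLyapunov k ε z ≤ (1 + k + ε) / 2 * (z.1 ^ 2 + z.2 ^ 2) := by
    rw [linearLyapunov]
    linarith [mul_nonneg hε (sq_nonneg (z.1 - z.2)), mul_nonneg hk (sq_nonneg z.2), sq_nonneg z.1]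
  have hnorm := mul_le_mul_of_nonneg_left (sq_add_sq_le_two_mul_norm_sq z)
    (by positivity : 0 ≤ (1 + k + ε) / 2)
  linarith

lemma hasDerivWithinAt_linearLyapunov_sub {γ₁ γ₂ : ℝ → ℝ × ℝ}
    (hγ₁ : IsIntegralCurveOn γ₁ (oscillatorField A g f) s)
    (hγ₂ : IsIntegralCurveOn γ₂ (oscillatorField A g f) s) (k ε : ℝ) (ht : t ∈ s)
    {q v X : ℝ} (hq : q = (γ₁ t).1 - (γ₂ t).1) (hv : v = (γ₁ t).2 - (γ₂ t).2)
    (hX : X = g (γ₁ t).1 - g (γ₂ t).1 - k * q) :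
    HasDerivWithinAt (fun t => linearLyapunov k ε (γ₁ t - γ₂ t))
      (-A * v ^ 2 - v * X + ε * (v ^ 2 + q * (-A * v - k * q - X))) s t := by
  obtain ⟨hx₁, hv₁⟩ := isIntegralCurveOn_oscillatorField_iff.1 hγ₁ t ht
  obtain ⟨hx₂, hv₂⟩ := isIntegralCurveOn_oscillatorField_iff.1 hγ₂ t ht
  refine (((((hv₁.sub hv₂).pow 2).div_const 2).add (((hx₁.sub hx₂).pow 2).const_mul (k / 2))).add
    (((hx₁.sub hx₂).mul (hv₁.sub hv₂)).const_mul ε)).congr_deriv ?_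
  simp only [Pi.sub_apply, hX, hq, hv]
  ring

/- Near the rest point the nonlinear remainder is a small multiple of the distance, hence absorbed
by the dissipation of the linearized equation. -/
lemma exists_antitoneOn_linearLyapunov_sub (hA : 0 < A) (hg : IsRestoringForce K g) :
    ∃ ε δ : ℝ, 0 < ε ∧ 0 < δ ∧ (∀ z, ε / 2 * ‖z‖ ^ 2 ≤ linearLyapunov (deriv g 1) ε z) ∧
      ∀ (s : Set ℝ) (γ₁ γ₂ : ℝ → ℝ × ℝ), Convex ℝ s →
        IsIntegralCurveOn γ₁ (oscillatorField A g f) s →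
        IsIntegralCurveOn γ₂ (oscillatorField A g f) s →
        (∀ t ∈ s, |(γ₁ t).1 - 1| ≤ δ) → (∀ t ∈ s, |(γ₂ t).1 - 1| ≤ δ) →
        AntitoneOn (fun t => linearLyapunov (deriv g 1) ε (γ₁ t - γ₂ t)) s := by
  have hk : 0 < deriv g 1 := hg.pos.trans_le (hg.le_deriv 1 one_pos)
  generalize hkdef : deriv g 1 = k at hk ⊢
  obtain ⟨ε, R, hε, hR, hlyap⟩ := exists_lyapunov_coefficients hA hk
  obtain ⟨δ, hδ, hrem⟩ := exists_abs_sub_linear_le hg (η := ε / (2 * R)) (by positivity)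
  have hlinear := fun q v X : ℝ =>
    hlyap v q (k * q) (k / 2 * q ^ 2) X (by linarith) (by nlinarith [sq_nonneg q]) le_rfl
  have hcoercive : ∀ z : ℝ × ℝ, ε / 2 * (z.1 ^ 2 + z.2 ^ 2) ≤ linearLyapunov k ε z :=
    fun z => (hlinear z.1 z.2 0).1
  refine ⟨ε, δ, hε, hδ, fun z => (mul_le_mul_of_nonneg_left (norm_sq_le_sq_add_sq z)
    (half_pos hε).le).trans (hcoercive z), fun s γ₁ γ₂ hs hγ₁ hγ₂ h₁ h₂ => ?_⟩
  refine antitoneOn_of_forall_hasDerivWithinAt_nonpos hs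
    (fun t ht => hasDerivWithinAt_linearLyapunov_sub hγ₁ hγ₂ k ε ht rfl rfl rfl) fun t ht => ?_
  have hX := hkdef ▸ hrem _ _ (h₁ t ht) (h₂ t ht)
  generalize (γ₁ t).2 - (γ₂ t).2 = v
  generalize g (γ₁ t).1 - g (γ₂ t).1 - k * ((γ₁ t).1 - (γ₂ t).1) = X at hX ⊢
  generalize (γ₁ t).1 - (γ₂ t).1 = q at hX ⊢
  have hXsq : R * X ^ 2 ≤ (ε / 2) ^ 2 * q ^ 2 := by
    calc R * X ^ 2 ≤ R * (ε / (2 * R) * |q|) ^ 2 := by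
          rw [← sq_abs X]
          gcongr
      _ = (ε / 2) ^ 2 * q ^ 2 / R := by
          rw [mul_pow, sq_abs]
          field_simp
      _ ≤ (ε / 2) ^ 2 * q ^ 2 := div_le_self (by positivity) hR
  have hdecay : (ε / 2) ^ 2 * (q ^ 2 + v ^ 2)
      ≤ ε / 2 * (v ^ 2 / 2 + k / 2 * q ^ 2 + ε * (q * v)) := by
    rw [pow_two (ε / 2), mul_assoc]
    exact mul_le_mul_of_nonneg_left (hcoercive (q, v)) (half_pos hε).le
  linarith [(hlinear q v X).2, mul_nonneg (sq_nonneg (ε / 2)) (sq_nonneg v)]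

lemma exists_dist_le_mul_dist_of_near_rest (hA : 0 < A) (hg : IsRestoringForce K g) :
    ∃ δ B : ℝ, 0 < δ ∧ 0 < B ∧ ∀ (a b : ℝ) (γ₁ γ₂ : ℝ → ℝ × ℝ),
      IsIntegralCurveOn γ₁ (oscillatorField A g f) (Icc a b) →
      IsIntegralCurveOn γ₂ (oscillatorField A g f) (Icc a b) →
      (∀ t ∈ Icc a b, dist (γ₁ t) (1, 0) ≤ δ) → (∀ t ∈ Icc a b, dist (γ₂ t) (1, 0) ≤ δ) →
      ∀ t ∈ Icc a b, dist (γ₁ t) (γ₂ t) ≤ B * dist (γ₁ a) (γ₂ a) := by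
  obtain ⟨ε, δ, hε, hδ, hcoercive, hanti⟩ := exists_antitoneOn_linearLyapunov_sub (f := f) hA hg
  have hk : 0 < deriv g 1 := hg.pos.trans_le (hg.le_deriv 1 one_pos)
  have hB : 0 < 2 / ε * (1 + deriv g 1 + ε) := by positivity
  refine ⟨δ, √(2 / ε * (1 + deriv g 1 + ε)), hδ, Real.sqrt_pos.2 hB,
    fun a b γ₁ γ₂ hγ₁ hγ₂ h₁ h₂ t ht => (sq_le_sq₀ dist_nonneg (by positivity)).1 ?_⟩
  have hV : linearLyapunov (deriv g 1) ε (γ₁ t - γ₂ t)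
      ≤ linearLyapunov (deriv g 1) ε (γ₁ a - γ₂ a) :=
    hanti (Icc a b) γ₁ γ₂ (convex_Icc a b) hγ₁ hγ₂
      (fun t ht => (le_max_left _ _).trans (h₁ t ht))
      (fun t ht => (le_max_left _ _).trans (h₂ t ht)) (left_mem_Icc.2 (ht.1.trans ht.2)) ht ht.1
  rw [mul_pow, Real.sq_sqrt hB.le, dist_eq_norm, dist_eq_norm]
  calc ‖γ₁ t - γ₂ t‖ ^ 2 = 2 / ε * (ε / 2 * ‖γ₁ t - γ₂ t‖ ^ 2) := by field_simp
    _ ≤ 2 / ε * ((1 + deriv g 1 + ε) * ‖γ₁ a - γ₂ a‖ ^ 2) :=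
        mul_le_mul_of_nonneg_left
          ((hcoercive _).trans (hV.trans (linearLyapunov_le hk.le hε.le _))) (by positivity)
    _ = 2 / ε * (1 + deriv g 1 + ε) * ‖γ₁ a - γ₂ a‖ ^ 2 := by ring

end Oscillator

section LowEnergy

/-- `Φ t` bounds the energy that the force `f` can have fed, by time `t`, into an oscillator with
damping `A` starting at rest at time `-∞`. -/
structure IsEnergyBudget (A : ℝ) (f Φ : ℝ → ℝ) : Prop where
  differentiable : Differentiable ℝ Φ
  sq_le : ∀ t, f t ^ 2 ≤ 4 * A * deriv Φ t
  tendsto_atBot : Tendsto Φ atBot (𝓝 0)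

variable {A K : ℝ} {g f Φ : ℝ → ℝ} {γ γ₁ γ₂ : ℝ → ℝ × ℝ} {s : Set ℝ} {a b : ℝ}

lemma IsEnergyBudget.monotone (hΦ : IsEnergyBudget A f Φ) (hA : 0 < A) : Monotone Φ :=
  monotone_of_deriv_nonneg hΦ.differentiable fun t =>
    (mul_nonneg_iff_of_pos_left (by positivity)).1 ((sq_nonneg _).trans (hΦ.sq_le t))

lemma IsEnergyBudget.nonneg (hΦ : IsEnergyBudget A f Φ) (hA : 0 < A) (t : ℝ) : 0 ≤ Φ t :=
  (hΦ.monotone hA).le_of_tendsto hΦ.tendsto_atBot t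

lemma antitoneOn_energy_sub (hA : 0 < A) (hg : IsRestoringForce K g) (hΦ : IsEnergyBudget A f Φ)
    (hs : Convex ℝ s) (hγ : IsIntegralCurveOn γ (oscillatorField A g f) s)
    (hpos : ∀ t ∈ s, 0 < (γ t).1) : AntitoneOn (fun t => energy g (γ t) - Φ t) s := by
  refine antitoneOn_of_forall_hasDerivWithinAt_nonpos hs (fun t ht =>
    (hasDerivWithinAt_energy hg hγ ht (hpos t ht)).sub
      (hΦ.differentiable t).hasDerivAt.hasDerivWithinAt) fun t _ => ?_
  have hsq : 4 * A * (-A * (γ t).2 ^ 2 - (γ t).2 * f t - deriv Φ t)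
      = f t ^ 2 - 4 * A * deriv Φ t - (2 * A * (γ t).2 + f t) ^ 2 := by ring
  refine nonpos_of_mul_nonpos_right (hsq.trans_le ?_) (by positivity : 0 < 4 * A)
  linarith [hΦ.sq_le t, sq_nonneg (2 * A * (γ t).2 + f t)]

/-- `γ` is a motion of the forced oscillator whose energy stays within the budget `Φ`. On the whole
line these are the motions that emanate from the rest point at time `-∞`. -/
structure IsLowEnergyOn (A : ℝ) (g f Φ : ℝ → ℝ) (γ : ℝ → ℝ × ℝ) (s : Set ℝ) : Prop where
  isIntegralCurveOn : IsIntegralCurveOn γ (oscillatorField A g f) s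
  pos : ∀ t ∈ s, 0 < (γ t).1
  energy_le : ∀ t ∈ s, energy g (γ t) ≤ Φ t

lemma IsLowEnergyOn.mono {s' : Set ℝ} (h : IsLowEnergyOn A g f Φ γ s) (hs : s' ⊆ s) :
    IsLowEnergyOn A g f Φ γ s' where
  isIntegralCurveOn := h.isIntegralCurveOn.mono hs
  pos t ht := h.pos t (hs ht)
  energy_le t ht := h.energy_le t (hs ht)

lemma isLowEnergyOn_Icc (hA : 0 < A) (hg : IsRestoringForce K g) (hΦ : IsEnergyBudget A f Φ)
    (hγ : IsIntegralCurveOn γ (oscillatorField A g f) (Icc a b))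
    (hpos : ∀ t ∈ Icc a b, 0 < (γ t).1) (ha : energy g (γ a) ≤ Φ a) :
    IsLowEnergyOn A g f Φ γ (Icc a b) where
  isIntegralCurveOn := hγ
  pos := hpos
  energy_le t ht := by
    have hle := antitoneOn_energy_sub hA hg hΦ (convex_Icc a b) hγ hpos
      (left_mem_Icc.2 (ht.1.trans ht.2)) ht ht.1
    simp only at hle
    linarith

lemma IsRestoringForce.exists_dist_rest_le_of_energy_le (hg : IsRestoringForce K g) {δ : ℝ}
    (hδ : 0 < δ) :
    ∃ e > 0, ∀ z : ℝ × ℝ, 0 < z.1 → energy g z ≤ e → dist z (1, 0) ≤ δ := by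
  have hc : 0 < min (K / 2) (1 / 2) := lt_min (half_pos hg.pos) one_half_pos
  refine ⟨min (K / 2) (1 / 2) * δ ^ 2, by positivity, fun z hz he => ?_⟩
  have hnorm : ‖z - (1, 0)‖ ^ 2 ≤ (z.1 - 1) ^ 2 + z.2 ^ 2 := by
    have hle := norm_sq_le_sq_add_sq (z - (1, 0))
    rwa [Prod.fst_sub, Prod.snd_sub, sub_zero] at hle
  rw [dist_eq_norm, ← sq_le_sq₀ (norm_nonneg _) hδ.le]
  refine le_of_mul_le_mul_left ?_ hc
  calc min (K / 2) (1 / 2) * ‖z - (1, 0)‖ ^ 2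
      ≤ min (K / 2) (1 / 2) * ((z.1 - 1) ^ 2 + z.2 ^ 2) := by gcongr
    _ ≤ K / 2 * (z.1 - 1) ^ 2 + z.2 ^ 2 / 2 := by
        rw [mul_add]
        nlinarith [mul_le_mul_of_nonneg_right (min_le_left (K / 2) (1 / 2)) (sq_nonneg (z.1 - 1)),
          mul_le_mul_of_nonneg_right (min_le_right (K / 2) (1 / 2)) (sq_nonneg z.2)]
    _ ≤ energy g z := hg.mul_sq_add_sq_le_energy hz
    _ ≤ min (K / 2) (1 / 2) * δ ^ 2 := he

lemma IsRestoringForce.exists_lipschitzOnWith_oscillatorField (hg : IsRestoringForce K g)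
    (A : ℝ) (f : ℝ → ℝ) {m : ℝ} (hm : 0 < m) (M : ℝ) :
    ∃ L : ℝ≥0, ∀ t, LipschitzOnWith L (oscillatorField A g f t) (Icc m M ×ˢ Icc (-M) M) := by
  have hsmooth : ContDiffOn ℝ 1 (fun z : ℝ × ℝ => (z.2, -A * z.2 - g z.1))
      (Icc m M ×ˢ Icc (-M) M) :=
    contDiffOn_snd.prodMk ((contDiffOn_const.mul contDiffOn_snd).sub
      (hg.contDiffOn.comp contDiffOn_fst fun z hz => hm.trans_le hz.1.1))
  obtain ⟨L, hL⟩ := hsmooth.exists_lipschitzOnWith one_ne_zero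
    ((convex_Icc m M).prod (convex_Icc (-M) M)) (isCompact_Icc.prod isCompact_Icc)
  refine ⟨L, fun t => LipschitzOnWith.of_dist_le_mul fun z hz w hw => ?_⟩
  simpa only [oscillatorField, Prod.dist_eq, dist_sub_right] using hL.dist_le_mul z hz w hw

lemma IsRestoringForce.continuousAt_oscillatorField (hg : IsRestoringForce K g) (A : ℝ)
    (hf : Continuous f) {t : ℝ} {z : ℝ × ℝ} (hz : 0 < z.1) :
    ContinuousAt (uncurry (oscillatorField A g f)) (t, z) := by
  have hgz : ContinuousAt (fun q : ℝ × ℝ × ℝ => g q.2.1) (t, z) :=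
    ContinuousAt.comp (f := fun q : ℝ × ℝ × ℝ => q.2.1) (hg.differentiableAt hz).continuousAt
      (by fun_prop)
  have hdamp : ContinuousAt (fun q : ℝ × ℝ × ℝ => -A * q.2.2) (t, z) := by fun_prop
  exact ContinuousAt.prodMk (by fun_prop)
    ((hdamp.sub hgz).sub (hf.comp continuous_fst).continuousAt)

lemma IsRestoringForce.continuousAt_energy (hg : IsRestoringForce K g) {z : ℝ × ℝ}
    (hz : 0 < z.1) : ContinuousAt (energy g) z := by
  have hpot : ContinuousAt (fun z : ℝ × ℝ => potential g z.1) z :=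
    (hg.hasDerivAt_potential hz).continuousAt.comp continuousAt_fst
  exact ContinuousAt.add (by fun_prop) hpot

lemma energy_rest (g : ℝ → ℝ) : energy g (1, 0) = 0 := by simp [energy, potential]

lemma exists_isLowEnergyOn_Icc (hA : 0 < A) (hg : IsRestoringForce K g)
    (hΦ : IsEnergyBudget A f Φ) (hf : Continuous f) (hab : a ≤ b) :
    ∃ γ, IsLowEnergyOn A g f Φ γ (Icc a b) := by
  obtain ⟨m, M, hm, hbox⟩ := hg.exists_box_of_energy_le (Φ b)
  obtain ⟨⟨hm1, h1M⟩, hM0, h0M⟩ :=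
    hbox (1, 0) one_pos ((energy_rest g).trans_le (hΦ.nonneg hA b))
  have hinterior : interior (Icc m M ×ˢ Icc (-M) M) = Ioo m M ×ˢ Ioo (-M) M := by
    rw [interior_prod_eq, interior_Icc, interior_Icc]
  have hpos : ∀ z ∈ Icc m M ×ˢ Icc (-M) M, 0 < z.1 := fun z hz => hm.trans_le hz.1.1
  have hcont : ContinuousOn (uncurry (oscillatorField A g f))
      (Icc a b ×ˢ (Icc m M ×ˢ Icc (-M) M)) := fun q hq =>
    (hg.continuousAt_oscillatorField A hf (hpos q.2 hq.2)).continuousWithinAt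
  obtain ⟨L, hL⟩ := (isCompact_Icc.prod
    (isCompact_Icc.prod isCompact_Icc)).exists_bound_of_continuousOn hcont
  obtain ⟨L', hL'⟩ := hg.exists_lipschitzOnWith_oscillatorField A f hm M
  have hlow : ∀ γ : ℝ → ℝ × ℝ, γ a = (1, 0) → ∀ c,
      IsIntegralCurveOn γ (oscillatorField A g f) (Icc a c) →
      MapsTo γ (Icc a c) (Icc m M ×ˢ Icc (-M) M) → IsLowEnergyOn A g f Φ γ (Icc a c) :=
    fun γ hγa c hγ hmaps => isLowEnergyOn_Icc hA hg hΦ hγ (fun t ht => hpos _ (hmaps ht))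
      (by rw [hγa, energy_rest]; exact hΦ.nonneg hA a)
  obtain ⟨P, hP, hPmem, hPid⟩ :=
    exists_lipschitzWith_retraction_Icc_prod_Icc (hm1.trans h1M).le (hM0.trans h0M).le
  obtain ⟨γ, hγa, hγ, hmaps⟩ := exists_isIntegralCurveOn_Icc_of_retraction hab
    (F := oscillatorField A g f) (L := L.toNNReal) (x₀ := (1, 0))
    (isClosed_Icc.prod isClosed_Icc) hP hPmem hPid
    (fun t _ => hL' t)
    (fun z hz => hcont.comp (by fun_prop : ContinuousOn (·, z) _) fun t ht => ⟨ht, hz⟩)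
    (fun t ht z hz => (hL (t, z) ⟨ht, hz⟩).trans (Real.le_coe_toNNReal L))
    (hinterior ▸ ⟨⟨hm1, h1M⟩, hM0, h0M⟩) fun γ hγa c hc hγ hmaps => by
      have hc' : c ∈ Icc a c := right_mem_Icc.2 hc.1
      have hγc := hlow γ hγa c hγ hmaps
      rw [hinterior]
      exact hbox _ (hγc.pos c hc') ((hγc.energy_le c hc').trans (hΦ.monotone hA hc.2))
  exact ⟨γ, hlow γ hγa b hγ hmaps⟩

/- In the remote past both motions are so close to rest that their distance can no longer grow by
more than a fixed factor; from then on Grönwall's inequality applies. -/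
lemma exists_dist_le_mul_dist_of_isLowEnergyOn (hA : 0 < A) (hg : IsRestoringForce K g)
    (hΦ : IsEnergyBudget A f Φ) (T : ℝ) :
    ∃ B > 0, ∀ᶠ a in atBot, ∀ γ₁ γ₂, IsLowEnergyOn A g f Φ γ₁ (Icc a T) →
      IsLowEnergyOn A g f Φ γ₂ (Icc a T) →
      ∀ t ∈ Icc a T, dist (γ₁ t) (γ₂ t) ≤ B * dist (γ₁ a) (γ₂ a) := by
  obtain ⟨δ, B, hδ, hB, hrest⟩ := exists_dist_le_mul_dist_of_near_rest (f := f) hA hg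
  obtain ⟨e, he, hnear⟩ := hg.exists_dist_rest_le_of_energy_le hδ
  obtain ⟨T₀, hT₀T, hT₀⟩ : ∃ T₀ ≤ T, Φ T₀ ≤ e :=
    ((eventually_le_atBot T).and (hΦ.tendsto_atBot.eventually_le_const he)).exists
  obtain ⟨m, M, hm, hbox⟩ := hg.exists_box_of_energy_le (Φ T)
  obtain ⟨L, hL⟩ := hg.exists_lipschitzOnWith_oscillatorField A f hm M
  refine ⟨B * Real.exp (L * (T - T₀)), by positivity, ?_⟩
  filter_upwards [eventually_le_atBot T₀] with a ha γ₁ γ₂ h₁ h₂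
  have hclose : ∀ {γ}, IsLowEnergyOn A g f Φ γ (Icc a T) →
      ∀ t ∈ Icc a T₀, dist (γ t) (1, 0) ≤ δ := fun hγ t ht =>
    have htT : t ∈ Icc a T := Icc_subset_Icc_right hT₀T ht
    hnear _ (hγ.pos t htT) ((hγ.energy_le t htT).trans ((hΦ.monotone hA ht.2).trans hT₀))
  have hmaps : ∀ {γ}, IsLowEnergyOn A g f Φ γ (Icc a T) →
      MapsTo γ (Icc T₀ T) (Icc m M ×ˢ Icc (-M) M) := fun hγ t ht =>
    have htT : t ∈ Icc a T := Icc_subset_Icc_left ha ht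
    prod_mono Ioo_subset_Icc_self Ioo_subset_Icc_self <|
      hbox _ (hγ.pos t htT) ((hγ.energy_le t htT).trans (hΦ.monotone hA ht.2))
  have hearly : ∀ t ∈ Icc a T₀, dist (γ₁ t) (γ₂ t) ≤ B * dist (γ₁ a) (γ₂ a) :=
    hrest a T₀ γ₁ γ₂ (h₁.isIntegralCurveOn.mono (Icc_subset_Icc_right hT₀T))
      (h₂.isIntegralCurveOn.mono (Icc_subset_Icc_right hT₀T)) (hclose h₁) (hclose h₂)
  intro t ht
  rw [mul_right_comm]
  rcases le_total t T₀ with h | h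
  · refine (hearly t ⟨ht.1, h⟩).trans (le_mul_of_one_le_right (by positivity) ?_)
    exact Real.one_le_exp (mul_nonneg L.coe_nonneg (sub_nonneg.2 hT₀T))
  · refine (dist_le_of_isIntegralCurveOn_Icc (fun t _ => hL t)
      (h₁.isIntegralCurveOn.mono (Icc_subset_Icc_left ha))
      (h₂.isIntegralCurveOn.mono (Icc_subset_Icc_left ha)) (hmaps h₁) (hmaps h₂)
      ⟨h, ht.2⟩).trans ?_
    gcongr
    exacts [hearly T₀ (right_mem_Icc.2 ha), ht.2]

lemma eventually_dist_lt_of_isLowEnergyOn (hA : 0 < A) (hg : IsRestoringForce K g)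
    (hΦ : IsEnergyBudget A f Φ) (T : ℝ) {ε : ℝ} (hε : 0 < ε) :
    ∀ᶠ a in atBot, ∀ γ₁ γ₂, IsLowEnergyOn A g f Φ γ₁ (Icc a T) →
      IsLowEnergyOn A g f Φ γ₂ (Icc a T) → ∀ t ∈ Icc a T, dist (γ₁ t) (γ₂ t) < ε := by
  obtain ⟨B, hB, hdist⟩ := exists_dist_le_mul_dist_of_isLowEnergyOn hA hg hΦ T
  obtain ⟨e, he, hnear⟩ := hg.exists_dist_rest_le_of_energy_le (δ := ε / (3 * B)) (by positivity)
  filter_upwards [hdist, hΦ.tendsto_atBot.eventually_le_const he] with a ha hae γ₁ γ₂ h₁ h₂ t ht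
  have haT : a ∈ Icc a T := left_mem_Icc.2 (ht.1.trans ht.2)
  have hrest : ∀ {γ}, IsLowEnergyOn A g f Φ γ (Icc a T) → dist (γ a) (1, 0) ≤ ε / (3 * B) :=
    fun hγ => hnear _ (hγ.pos a haT) ((hγ.energy_le a haT).trans hae)
  calc dist (γ₁ t) (γ₂ t) ≤ B * dist (γ₁ a) (γ₂ a) := ha γ₁ γ₂ h₁ h₂ t ht
    _ ≤ B * (ε / (3 * B) + ε / (3 * B)) := by
        gcongr
        exact (dist_triangle_right _ _ _).trans (add_le_add (hrest h₁) (hrest h₂))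
    _ = 2 / 3 * ε := by field_simp; ring
    _ < ε := by linarith

lemma IsLowEnergyOn.eq (hA : 0 < A) (hg : IsRestoringForce K g) (hΦ : IsEnergyBudget A f Φ)
    (h₁ : IsLowEnergyOn A g f Φ γ₁ univ) (h₂ : IsLowEnergyOn A g f Φ γ₂ univ) : γ₁ = γ₂ := by
  ext1 T
  refine eq_of_forall_dist_le fun ε hε => ?_
  obtain ⟨a, hdist, ha⟩ := ((eventually_dist_lt_of_isLowEnergyOn hA hg hΦ T hε).and
    (eventually_le_atBot T)).exists
  exact (hdist γ₁ γ₂ (h₁.mono (subset_univ _)) (h₂.mono (subset_univ _)) T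
    (right_mem_Icc.2 ha)).le

lemma isLowEnergyOn_univ_of_tendstoUniformlyOn (hg : IsRestoringForce K g) (hf : Continuous f)
    {Γ : ℕ → ℝ → ℝ × ℝ} (hΓ : ∀ n : ℕ, IsLowEnergyOn A g f Φ (Γ n) (Icc (-n) n))
    (hlim : ∀ T, TendstoUniformlyOn Γ γ atTop (Icc (-T) T)) :
    IsLowEnergyOn A g f Φ γ univ := by
  have hlow : ∀ T : ℝ, ∀ᶠ n in atTop, IsLowEnergyOn A g f Φ (Γ n) (Icc (-T) T) := fun T => by
    filter_upwards [eventually_ge_atTop ⌈T⌉₊] with n hn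
    have hTn : T ≤ n := Nat.ceil_le.1 hn
    exact (hΓ n).mono (Icc_subset_Icc (neg_le_neg hTn) hTn)
  have hmem : ∀ t : ℝ, t ∈ Icc (-|t|) |t| := fun t => ⟨neg_abs_le t, le_abs_self t⟩
  have htendsto : ∀ t, Tendsto (Γ · t) atTop (𝓝 (γ t)) := fun t => (hlim |t|).tendsto_at (hmem t)
  have hpos : ∀ t, 0 < (γ t).1 := fun t => by
    obtain ⟨m, M, hm, hbox⟩ := hg.exists_box_of_energy_le (Φ t)
    refine hm.trans_le (ge_of_tendsto ((continuous_fst.tendsto _).comp (htendsto t)) ?_)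
    filter_upwards [hlow |t|] with n hn
    exact (hbox _ (hn.pos t (hmem t)) (hn.energy_le t (hmem t))).1.1.le
  refine ⟨fun t _ => HasDerivAt.hasDerivWithinAt ?_, fun t _ => hpos t, fun t _ => ?_⟩
  · exact hasDerivAt_of_tendstoUniformlyOn_integralCurveOn
      (Icc_mem_nhds (neg_lt.1 ((neg_le_abs t).trans_lt (lt_add_one _)))
        ((le_abs_self t).trans_lt (lt_add_one _)))
      (hlim (|t| + 1)) ((hlow (|t| + 1)).mono fun n hn => hn.isIntegralCurveOn)
      (hg.continuousAt_oscillatorField A hf (hpos t))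
  · refine le_of_tendsto ((hg.continuousAt_energy (hpos t)).tendsto.comp (htendsto t)) ?_
    exact (hlow |t|).mono fun n hn => hn.energy_le t (hmem t)

/- The motions starting at rest at times `-n` converge as `n → ∞`. -/
lemma exists_isLowEnergyOn_univ (hA : 0 < A) (hg : IsRestoringForce K g)
    (hΦ : IsEnergyBudget A f Φ) (hf : Continuous f) :
    ∃ γ, IsLowEnergyOn A g f Φ γ univ := by
  choose Γ hΓ using fun n : ℕ =>
    exists_isLowEnergyOn_Icc hA hg hΦ hf (neg_le_self (Nat.cast_nonneg (α := ℝ) n))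
  have hcauchy : ∀ T, UniformCauchySeqOn Γ atTop (Icc (-T) T) := fun T => by
    refine Metric.uniformCauchySeqOn_iff.2 fun ε hε => ?_
    obtain ⟨n₀, hdist, hT⟩ : ∃ n₀ : ℕ, (∀ γ₁ γ₂,
        IsLowEnergyOn A g f Φ γ₁ (Icc (-n₀) T) → IsLowEnergyOn A g f Φ γ₂ (Icc (-n₀) T) →
        ∀ t ∈ Icc (-(n₀ : ℝ)) T, dist (γ₁ t) (γ₂ t) < ε) ∧ T ≤ n₀ :=
      (((tendsto_neg_atTop_atBot.comp tendsto_natCast_atTop_atTop).eventually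
        (eventually_dist_lt_of_isLowEnergyOn hA hg hΦ T hε)).and
        (tendsto_natCast_atTop_atTop.eventually_ge_atTop T)).exists
    have hlow : ∀ n ≥ n₀, IsLowEnergyOn A g f Φ (Γ n) (Icc (-n₀) T) := fun n hn => by
      have hn' : (n₀ : ℝ) ≤ n := Nat.cast_le.2 hn
      exact (hΓ n).mono (Icc_subset_Icc (neg_le_neg hn') (hT.trans hn'))
    exact ⟨n₀, fun i hi j hj t ht => hdist _ _ (hlow i hi) (hlow j hj) t
      (Icc_subset_Icc_left (neg_le_neg hT) ht)⟩
  obtain ⟨γ, hγ⟩ := exists_forall_tendstoUniformlyOn_Icc hcauchy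
  exact ⟨γ, isLowEnergyOn_univ_of_tendstoUniformlyOn hg hf hΓ hγ⟩

lemma isIntegralCurve_oscillatorField_iff :
    IsIntegralCurve γ (oscillatorField A g f) ↔ ∀ t,
      HasDerivAt (fun t => (γ t).1) (γ t).2 t ∧
      HasDerivAt (fun t => (γ t).2) (-A * (γ t).2 - g (γ t).1 - f t) t := by
  simp only [← isIntegralCurveOn_univ, isIntegralCurveOn_oscillatorField_iff, mem_univ,
    forall_const, hasDerivWithinAt_univ]

lemma exists_abs_velocity_le (hA : 0 < A) (hg : IsRestoringForce K g) (hΦ : IsEnergyBudget A f Φ)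
    (hγ : IsIntegralCurve γ (oscillatorField A g f)) {m M T : ℝ} (hm : 0 < m)
    (htrap : ∀ t ≤ T, (γ t).1 ∈ Icc m M) : ∃ W, ∀ t ≤ T, |(γ t).2| ≤ W := by
  have hcurve := isIntegralCurve_oscillatorField_iff.1 hγ
  obtain ⟨G, hG⟩ := isCompact_Icc.exists_bound_of_continuousOn
    (hg.contDiffOn.continuousOn.mono fun x (hx : x ∈ Icc m M) => hm.trans_le hx.1)
  have hforce : ∀ t ≤ T, |-A * (γ t).2 - g (γ t).1 - f t + A * (γ t).2|
      ≤ G + 1 + 4 * A * deriv Φ t := fun t ht => by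
    have hf : |f t| ≤ 1 + 4 * A * deriv Φ t := by
      nlinarith [hΦ.sq_le t, sq_abs (f t), sq_nonneg (|f t| - 1), abs_nonneg (f t)]
    calc |-A * (γ t).2 - g (γ t).1 - f t + A * (γ t).2| = |g (γ t).1 + f t| := by
          rw [← abs_neg]
          congr 1
          ring
      _ ≤ |g (γ t).1| + |f t| := abs_add_le _ _
      _ ≤ G + 1 + 4 * A * deriv Φ t := by
          linarith [Real.norm_eq_abs (g (γ t).1) ▸ hG _ (htrap t ht)]
  refine ⟨2 * M + 2 * |A| * M + (G + 1 + 4 * A * Φ T), fun t ht => ?_⟩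
  have hT : ∀ s ∈ Icc (t - 1) (t - 1 + 1), s ≤ T := fun s hs => by linarith [hs.2]
  have hv := abs_le_of_abs_hasDerivAt_add_le (a := t - 1) (A := A) (M := M)
    (β := fun t => t * (G + 1) + 4 * A * Φ t) (β' := fun t => G + 1 + 4 * A * deriv Φ t)
    (fun s _ => (hcurve s).1) (fun s _ => (hcurve s).2)
    (fun s _ => (hasDerivAt_mul_const (G + 1)).add
      ((hΦ.differentiable s).hasDerivAt.const_mul (4 * A)))
    (fun s hs => hforce s (hT s hs))
    (fun s hs => (abs_of_pos (hm.trans_le (htrap s (hT s hs)).1)).trans_le (htrap s (hT s hs)).2)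
  rw [sub_add_cancel] at hv
  nlinarith [mul_le_mul_of_nonneg_left (hΦ.monotone hA ht) hA.le,
    mul_nonneg hA.le (hΦ.nonneg hA (t - 1))]

/-- The energy corrected by a small multiple `ε` of the product of displacement and velocity,
which makes it decay strictly along unforced motions. -/
def lyapunov (g : ℝ → ℝ) (ε : ℝ) (z : ℝ × ℝ) : ℝ := energy g z + ε * ((z.1 - 1) * z.2)

lemma hasDerivAt_lyapunov (hg : IsRestoringForce K g)
    (hγ : IsIntegralCurve γ (oscillatorField A g f)) (ε : ℝ) {t : ℝ} (hpos : 0 < (γ t).1) :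
    HasDerivAt (fun t => lyapunov g ε (γ t))
      (-A * (γ t).2 ^ 2 - (γ t).2 * f t + ε * ((γ t).2 ^ 2
        + ((γ t).1 - 1) * (-A * (γ t).2 - g (γ t).1 - f t))) t := by
  obtain ⟨hx, hv⟩ := isIntegralCurve_oscillatorField_iff.1 hγ t
  have henergy := hasDerivWithinAt_univ.1
    (hasDerivWithinAt_energy hg (isIntegralCurveOn_univ.2 hγ) (mem_univ t) hpos)
  refine (henergy.add (((hx.sub_const 1).mul hv).const_mul ε)).congr_deriv ?_
  ring

lemma exists_lyapunov_le (hA : 0 < A) (hg : IsRestoringForce K g) (hΦ : IsEnergyBudget A f Φ)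
    (hγ : IsIntegralCurve γ (oscillatorField A g f)) {m M T : ℝ} (hm : 0 < m)
    (htrap : ∀ t ≤ T, (γ t).1 ∈ Icc m M) (ε : ℝ) : ∃ B, ∀ t ≤ T, lyapunov g ε (γ t) ≤ B := by
  obtain ⟨W, hW⟩ := exists_abs_velocity_le hA hg hΦ hγ hm htrap
  have hcont : ContinuousOn (lyapunov g ε) (Icc m M ×ˢ Icc (-W) W) := fun z hz => by
    have henergy := hg.continuousAt_energy (hm.trans_le hz.1.1)
    have hcorrection : ContinuousAt (fun z : ℝ × ℝ => ε * ((z.1 - 1) * z.2)) z := by fun_prop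
    exact (henergy.add hcorrection).continuousWithinAt
  obtain ⟨B, hB⟩ := (isCompact_Icc.prod isCompact_Icc).bddAbove_image hcont
  exact ⟨B, fun t ht => hB (mem_image_of_mem _ ⟨htrap t ht, abs_le.1 (hW t ht)⟩)⟩

/- The excess of the Lyapunov function over a multiple of the budget decays exponentially forward
in time, so it could be bounded in the past only by being nonpositive. -/
lemma exists_sq_add_sq_le_mul_budget (hA : 0 < A) (hg : IsRestoringForce K g)
    (hΦ : IsEnergyBudget A f Φ) (hγ : IsIntegralCurve γ (oscillatorField A g f)) {m M T : ℝ}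
    (hm : 0 < m) (htrap : ∀ t ≤ T, (γ t).1 ∈ Icc m M) :
    ∃ c, ∀ t ≤ T, ((γ t).1 - 1) ^ 2 + (γ t).2 ^ 2 ≤ c * Φ t := by
  obtain ⟨ε, R, hε, hR, hlyap⟩ := exists_lyapunov_coefficients hA hg.pos
  obtain ⟨B, hB⟩ := exists_lyapunov_le hA hg hΦ hγ hm htrap ε
  have hpos : ∀ t ≤ T, 0 < (γ t).1 := fun t ht => hm.trans_le (htrap t ht).1
  have hlyap' := fun t (ht : t ≤ T) => hlyap (γ t).2 ((γ t).1 - 1) (g (γ t).1)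
    (potential g (γ t).1) (f t) (hg.mul_sq_le (hpos t ht)) (hg.potential_le_mul (hpos t ht))
    (hg.mul_sq_le_potential (hpos t ht))
  have hbudget : ∀ t, 0 ≤ 4 * A * R * Φ t := fun t =>
    mul_nonneg (by positivity) (hΦ.nonneg hA t)
  have hnonpos : ∀ t ≤ T, lyapunov g ε (γ t) - 4 * A * R * Φ t ≤ 0 := fun t ht => by
    refine nonpos_of_hasDerivAt_le_neg_mul (T := t) (half_pos hε) (fun s hs =>
      (hasDerivAt_lyapunov hg hγ ε (hpos s (hs.trans ht))).sub
        ((hΦ.differentiable s).hasDerivAt.const_mul (4 * A * R))) (fun s hs => ?_)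
      fun s hs => (sub_le_self _ (hbudget s)).trans (hB s (hs.trans ht))
    have hforce : R * f s ^ 2 ≤ R * (4 * A * deriv Φ s) := by gcongr; exact hΦ.sq_le s
    have hdissipation := (hlyap' s (hs.trans ht)).2
    simp only [Pi.sub_apply, lyapunov, energy]
    linarith [mul_nonneg (half_pos hε).le (hbudget s)]
  refine ⟨2 / ε * (4 * A * R), fun t ht => ?_⟩
  have hcoercive := (hlyap' t ht).1.trans (sub_nonpos.1 (hnonpos t ht))
  rw [mul_assoc, div_mul_eq_mul_div, le_div_iff₀ hε]
  linarith

lemma tendsto_rest_atBot (hA : 0 < A) (hg : IsRestoringForce K g) (hΦ : IsEnergyBudget A f Φ)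
    (hγ : IsIntegralCurve γ (oscillatorField A g f)) {m M : ℝ} (hm : 0 < m)
    (htrap : ∀ᶠ t in atBot, (γ t).1 ∈ Icc m M) : Tendsto γ atBot (𝓝 (1, 0)) := by
  obtain ⟨T, hT⟩ := eventually_atBot.1 htrap
  obtain ⟨c, hc⟩ := exists_sq_add_sq_le_mul_budget hA hg hΦ hγ hm hT
  have hzero : Tendsto (fun t => √(c * Φ t)) atBot (𝓝 0) := by
    simpa using (hΦ.tendsto_atBot.const_mul c).sqrt
  refine tendsto_iff_norm_sub_tendsto_zero.2
    (squeeze_zero' (Eventually.of_forall fun _ => norm_nonneg _) ?_ hzero)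
  filter_upwards [eventually_le_atBot T] with t ht
  have hnorm := norm_sq_le_sq_add_sq (γ t - (1, 0))
  rw [Prod.fst_sub, Prod.snd_sub, sub_zero] at hnorm
  exact Real.le_sqrt_of_sq_le (hnorm.trans (hc t ht))

lemma isLowEnergyOn_univ_of_eventually_mem_Icc (hA : 0 < A) (hg : IsRestoringForce K g)
    (hΦ : IsEnergyBudget A f Φ) (hγ : IsIntegralCurve γ (oscillatorField A g f))
    (hpos : ∀ t, 0 < (γ t).1) {m M : ℝ} (hm : 0 < m)
    (htrap : ∀ᶠ t in atBot, (γ t).1 ∈ Icc m M) : IsLowEnergyOn A g f Φ γ univ := by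
  have hγ' := isIntegralCurveOn_univ.2 hγ
  refine ⟨hγ', fun t _ => hpos t, fun t _ => sub_nonpos.1 ?_⟩
  have hanti : Antitone (fun t => energy g (γ t) - Φ t) :=
    antitoneOn_univ.1 (antitoneOn_energy_sub hA hg hΦ convex_univ hγ' fun t _ => hpos t)
  have henergy : Tendsto (fun t => energy g (γ t)) atBot (𝓝 0) :=
    energy_rest g ▸ (hg.continuousAt_energy one_pos).tendsto.comp
      (tendsto_rest_atBot hA hg hΦ hγ hm htrap)
  exact hanti.ge_of_tendsto (by simpa using henergy.sub hΦ.tendsto_atBot) t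

end LowEnergy

section TimeReversal

variable {A K : ℝ} {g f φ : ℝ → ℝ} {γ : ℝ → ℝ × ℝ}

lemma isIntegralCurve_reverse (hφ : ContDiff ℝ 2 φ)
    (hode : ∀ t, deriv (deriv φ) t - A * deriv φ t + g (φ t) + f t = 0) :
    IsIntegralCurve (fun s => (φ (-s), -deriv φ (-s))) (oscillatorField A g fun s => f (-s)) := by
  have hφ' : Differentiable ℝ (deriv φ) :=
    (hφ.iterate_deriv' 1 1).differentiable one_ne_zero
  refine isIntegralCurve_oscillatorField_iff.2 fun s => ⟨?_, ?_⟩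
  · exact ((hφ.differentiable two_ne_zero (-s)).hasDerivAt.comp s (hasDerivAt_neg s)).congr_deriv
      (mul_neg_one _)
  · refine ((hφ' (-s)).hasDerivAt.comp s (hasDerivAt_neg s)).neg.congr_deriv ?_
    linarith [hode (-s)]

lemma contDiff_and_ode_of_isIntegralCurve (hg : IsRestoringForce K g) (hf : Continuous f)
    (hγ : IsIntegralCurve γ (oscillatorField A g fun s => f (-s))) (hpos : ∀ t, 0 < (γ t).1) :
    ContDiff ℝ 2 (fun t => (γ (-t)).1) ∧ ∀ t, deriv (deriv fun t => (γ (-t)).1) t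
      - A * deriv (fun t => (γ (-t)).1) t + g (γ (-t)).1 + f t = 0 := by
  have hcurve := isIntegralCurve_oscillatorField_iff.1 hγ
  have hφ : ∀ t, HasDerivAt (fun t => (γ (-t)).1) (-(γ (-t)).2) t := fun t =>
    ((hcurve (-t)).1.comp t (hasDerivAt_neg t)).congr_deriv (mul_neg_one _)
  have hφ' : ∀ t, HasDerivAt (fun t => -(γ (-t)).2)
      (-A * (γ (-t)).2 - g (γ (-t)).1 - f t) t := fun t =>
    ((hcurve (-t)).2.comp t (hasDerivAt_neg t)).neg.congr_deriv (by rw [neg_neg]; ring)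
  have hderiv : deriv (fun t => (γ (-t)).1) = fun t => -(γ (-t)).2 := funext fun t => (hφ t).deriv
  have hderiv' : deriv (fun t => -(γ (-t)).2) = fun t =>
    -A * (γ (-t)).2 - g (γ (-t)).1 - f t := funext fun t => (hφ' t).deriv
  have hγc : Continuous fun t => γ (-t) := hγ.continuous.comp continuous_neg
  have hgγ : Continuous fun t => g (γ (-t)).1 :=
    hg.contDiffOn.continuousOn.comp_continuous hγc.fst fun t => hpos (-t)
  refine ⟨?_, fun t => ?_⟩
  · rw [← one_add_one_eq_two, contDiff_succ_iff_deriv, hderiv, contDiff_one_iff_deriv, hderiv']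
    exact ⟨fun t => (hφ t).differentiableAt, by simp, fun t => (hφ' t).differentiableAt,
      ((hγc.snd.const_mul (-A)).sub hgγ).sub hf⟩
  · rw [hderiv, hderiv']
    ring

end TimeReversal

theorem unique_normalized_profile_general {A K : ℝ} {g f Φ : ℝ → ℝ} (hA : 0 < A)
    (hg : IsRestoringForce K g) (hf : Continuous f)
    (hΦ : IsEnergyBudget A (fun s => f (-s)) Φ) :
    ∃! φ : ℝ → ℝ, (∀ t, 0 < φ t) ∧ ContDiff ℝ 2 φ ∧
      (∀ t, deriv (deriv φ) t - A * deriv φ t + g (φ t) + f t = 0) ∧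
      ∃ m M : ℝ, 0 < m ∧ ∀ᶠ t in atTop, φ t ∈ Icc m M := by
  refine existsUnique_of_exists_of_unique ?_ ?_
  · obtain ⟨γ, hγ⟩ := exists_isLowEnergyOn_univ hA hg hΦ (hf.comp continuous_neg)
    have hpos : ∀ t, 0 < (γ t).1 := fun t => hγ.pos t (mem_univ t)
    obtain ⟨m, M, hm, hbox⟩ := hg.exists_box_of_energy_le (Φ 0)
    obtain ⟨hsmooth, hode⟩ := contDiff_and_ode_of_isIntegralCurve hg hf
      (isIntegralCurveOn_univ.1 hγ.isIntegralCurveOn) hpos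
    refine ⟨fun t => (γ (-t)).1, fun t => hpos (-t), hsmooth, hode, m, M, hm, ?_⟩
    filter_upwards [eventually_ge_atTop 0] with t ht
    exact Ioo_subset_Icc_self (hbox _ (hpos (-t)) ((hγ.energy_le (-t) (mem_univ _)).trans
      (hΦ.monotone hA (neg_nonpos.2 ht)))).1
  · have hlow : ∀ φ : ℝ → ℝ, ((∀ t, 0 < φ t) ∧ ContDiff ℝ 2 φ ∧
        (∀ t, deriv (deriv φ) t - A * deriv φ t + g (φ t) + f t = 0) ∧
        ∃ m M : ℝ, 0 < m ∧ ∀ᶠ t in atTop, φ t ∈ Icc m M) →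
        IsLowEnergyOn A g (fun s => f (-s)) Φ (fun s => (φ (-s), -deriv φ (-s))) univ := by
      rintro φ ⟨hpos, hφ, hode, m, M, hm, htrap⟩
      exact isLowEnergyOn_univ_of_eventually_mem_Icc hA hg hΦ (isIntegralCurve_reverse hφ hode)
        (fun t => hpos (-t)) hm (tendsto_neg_atBot_atTop.eventually htrap)
    intro φ₁ φ₂ h₁ h₂
    ext t
    simpa using congrArg Prod.fst (congrFun ((hlow φ₁ h₁).eq hA hg hΦ (hlow φ₂ h₂)) (-t))

section PowerForce

variable {K α : ℝ}

lemma hasDerivAt_powerForce (K α : ℝ) {x : ℝ} (hx : 0 < x) :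
    HasDerivAt (fun x => K * (x - x ^ (-α))) (K * (1 + α * x ^ (-α - 1))) x := by
  refine (((hasDerivAt_id x).sub (Real.hasDerivAt_rpow_const (Or.inl hx.ne'))).const_mul
    K).congr_deriv ?_
  ring

lemma contDiffOn_powerForce (K α : ℝ) : ContDiffOn ℝ 1 (fun x => K * (x - x ^ (-α))) (Ioi 0) :=
  contDiffOn_const.mul (contDiffOn_id.sub
    (contDiffOn_id.rpow_const_of_ne fun _ hx => (mem_Ioi.1 hx).ne'))

/- On `(0, 1]` the force exceeds its counterpart with `α = 1`, whose potential is
`K * (x ^ 2 / 2 - log x - 1 / 2)`. -/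
lemma neg_mul_log_sub_le_potential_powerForce (hK : 0 ≤ K) (hα : 1 ≤ α) {x : ℝ}
    (hx : x ∈ Ioc 0 1) :
    -K * Real.log x - K / 2 ≤ potential (fun x => K * (x - x ^ (-α))) x := by
  have hanti : AntitoneOn (fun x => potential (fun x => K * (x - x ^ (-α))) x
      - K * (x ^ 2 / 2 - Real.log x)) (Ioc 0 1) := by
    refine antitoneOn_of_forall_hasDerivWithinAt_nonpos (convex_Ioc 0 1) (fun z hz =>
      ((hasDerivAt_potential_of_continuousOn (contDiffOn_powerForce K α).continuousOn hz.1).sub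
        ((((hasDerivAt_pow 2 z).div_const 2).sub (Real.hasDerivAt_log hz.1.ne')).const_mul
          K)).hasDerivWithinAt) fun z hz => ?_
    have hpow : z⁻¹ ≤ z ^ (-α) := by
      rw [← Real.rpow_neg_one]
      exact Real.rpow_le_rpow_of_exponent_ge hz.1 hz.2 (neg_le_neg hα)
    have hmul := mul_le_mul_of_nonneg_left hpow hK
    norm_num
    linarith
  have hle := hanti hx (right_mem_Ioc.2 one_pos) hx.2
  have hone : potential (fun x => K * (x - x ^ (-α))) 1 = 0 := intervalIntegral.integral_same
  simp only [hone, Real.log_one] at hle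
  nlinarith [mul_nonneg hK (sq_nonneg x)]

lemma isRestoringForce_power (hK : 0 < K) (hα : 1 ≤ α) :
    IsRestoringForce K fun x => K * (x - x ^ (-α)) where
  pos := hK
  contDiffOn := contDiffOn_powerForce K α
  map_one := by simp
  le_deriv x hx := by
    rw [(hasDerivAt_powerForce K α hx).deriv]
    exact le_mul_of_one_le_right hK.le (le_add_of_nonneg_right (by positivity))
  tendsto_potential := by
    have hlog : Tendsto (fun x => -K * Real.log x - K / 2) (𝓝[>] 0) atTop :=
      tendsto_atTop_add_const_right _ _
        (Real.tendsto_log_nhdsGT_zero.const_mul_atBot_of_neg (neg_lt_zero.2 hK))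
    refine tendsto_atTop_mono' _ ?_ hlog
    filter_upwards [Ioc_mem_nhdsGT one_pos] with x hx
    exact neg_mul_log_sub_le_potential_powerForce hK.le hα hx

end PowerForce

lemma isEnergyBudget_exp {A : ℝ} (hA : A ≠ 0) {l : ℝ} (hl : 0 < l) (C : ℝ) :
    IsEnergyBudget A (fun t => C * Real.exp (l * t))
      fun t => C ^ 2 / (8 * A * l) * Real.exp (2 * l * t) := by
  have hderiv : ∀ t, HasDerivAt (fun t => C ^ 2 / (8 * A * l) * Real.exp (2 * l * t))
      (C ^ 2 / (4 * A) * Real.exp (2 * l * t)) t := fun t => by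
    refine (((hasDerivAt_id t).const_mul (2 * l)).exp.const_mul _).congr_deriv ?_
    simp only [id]
    field_simp
    ring
  refine ⟨fun t => (hderiv t).differentiableAt, fun t => le_of_eq ?_, ?_⟩
  · rw [(hderiv t).deriv, mul_pow, ← Real.exp_nat_mul, ← mul_assoc (4 * A),
      mul_div_cancel₀ _ (by simpa using hA), Nat.cast_ofNat, mul_assoc 2]
  · simpa using (Real.tendsto_exp_atBot.comp
      (tendsto_id.const_mul_atBot (by positivity : 0 < 2 * l))).const_mul (C ^ 2 / (8 * A * l))

/-- Uniqueness of the normalized profile: with `A = N - 2 + 4/(α+1)`,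
`c* = (2α/(α+1) · (N - 2 + 2/(α+1)))^(-1/(α+1))`, `C = p/c*` and
`g(φ) = (2/(α+1)) (N - 2 + 2/(α+1)) (φ - φ^(-α))`, there is exactly one positive `C²`
function `φ : ℝ → ℝ` satisfying `φ'' - A φ' + g(φ) + C e^(-(2α/(α+1)) t) = 0` on `ℝ`
with `0 < liminf_{t→∞} φ ≤ limsup_{t→∞} φ < ∞` (i.e. `φ` is eventually trapped in a
compact interval `[m, M]` with `m > 0`). -/
theorem unique_normalized_profile
    (N : ℕ) (hN : 2 ≤ N) (α p : ℝ) (hα : 1 < α) (hp : 0 < p)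
    (A cstar C : ℝ)
    (hA : A = (N : ℝ) - 2 + 4 / (α + 1))
    (hcstar : cstar = (2 * α / (α + 1) * ((N : ℝ) - 2 + 2 / (α + 1))) ^ (-(1 / (α + 1))))
    (hC : C = p / cstar) :
    ∃! φ : ℝ → ℝ, (∀ t : ℝ, 0 < φ t) ∧ ContDiff ℝ 2 φ ∧
      (∀ t : ℝ, deriv (deriv φ) t - A * deriv φ t
        + 2 / (α + 1) * ((N : ℝ) - 2 + 2 / (α + 1)) * (φ t - φ t ^ (-α))
        + C * Real.exp (-(2 * α / (α + 1)) * t) = 0) ∧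
      (∃ m M : ℝ, 0 < m ∧ ∀ᶠ t in atTop, φ t ∈ Icc m M) := by
  have : 0 < α + 1 := by linarith
  have hN' : (0 : ℝ) ≤ N - 2 := sub_nonneg.2 (by exact_mod_cast hN)
  have hK : 0 < 2 / (α + 1) * ((N : ℝ) - 2 + 2 / (α + 1)) := by positivity
  have hA_pos : 0 < A := hA ▸ by positivity
  have hrate : 0 < 2 * α / (α + 1) := by positivity
  exact unique_normalized_profile_general hA_pos (isRestoringForce_power hK hα.le) (by fun_prop)
    (by simpa using isEnergyBudget_exp hA_pos.ne' hrate C)
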